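/- Let G be a generalised Heisenberg group with finite generating set S and let ψ be any automorphism of G. Then gr_{ψ,G}^S(n) ≺ gr_{∼G}^S(n), where gr_{∼G}^S is the (ordinary) conjugacy growth function of G, i.e. the twisted conjugacy growth function with respect to the identity automorphism. -/

import Mathlib

/-- Word norm with respect to a finite generating set (inverses of generators allowed). -/
noncomputable def wordNorm {G : Type*} [Group G] (S : Finset G) (g : G) : ℕ :=
  sInf {n | ∃ l : List G, l.length = n ∧ (∀ x ∈ l, x ∈ S ∨ x⁻¹ ∈ S) ∧ l.prod = g}

/-- `x` and `y` are `ψ`-twisted conjugate. -/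
def TwistedConj {G : Type*} [Group G] (ψ : G ≃* G) (x y : G) : Prop :=
  ∃ g : G, g * x * (ψ g)⁻¹ = y

/-- The twisted conjugacy growth function: number of `ψ`-twisted conjugacy classes
with a representative of word norm at most `n`. -/
noncomputable def twistedGrowth {G : Type*} [Group G] (ψ : G ≃* G) (S : Finset G) (n : ℕ) : ℕ :=
  Set.ncard ((fun x => {y | TwistedConj ψ x y}) '' {g : G | wordNorm S g ≤ n})

def GrowthLE (f g : ℕ → ℝ) : Prop :=
  ∃ c : ℕ, 0 < c ∧ ∀ n : ℕ, max 1 (f n) ≤ c * max 1 (g (c * n))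

def GrowthEquiv (f g : ℕ → ℝ) : Prop := GrowthLE f g ∧ GrowthLE g f

/-!
Let `z` generate the isolator of the derived subgroup, so that `G` is a central extension of a
lattice `V` by `⟨z⟩` and `ψ z = z` or `ψ z = z⁻¹`. If some fixed `t ≠ 0` satisfies `x ∼_ψ x * z ^ t`
for all `x`, then each point of `V` has at most `|t|` twisted classes above it, and counting
conjugacy classes by their images in `V` is enough. This settles `ψ z = z⁻¹`, with `t = 2`.

Let `ψ z = z`. If `ψ` acts trivially on `V`, then `g * (ψ g)⁻¹ = z ^ τ g` for a homomorphism `τ`.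
Either `τ` is nonzero somewhere on the centre, which gives such a `t`, or `d • τ` is the commutator
form against some `w` for some `d ≠ 0`, and `x ↦ x ^ d * w` reflects conjugacy to `ψ`-conjugacy.

Otherwise `T v = v - ψ v` is nonzero on `V`. Fix in the ball of radius `n` a representative `r` of
each coset of `T V` that it meets. Every element of the ball is `ψ`-conjugate to some `r * z ^ j`
with `|j| = O(n ^ 2)`, and even `|j| = O(n)` unless the elements above `ker T` fix all of the fibre
through `r`. Two digits `i`, `k` of size `O(n)` encode `j`, and the element `r * a ^ i * b ^ k`, for
suitable `a` above `T V` and `b` independent of it, has norm `O(n)` and an image in `V` from which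
`r`, `i` and `k` can be read off, given one further bit that says which of the two bounds applies.
-/

/-! ### Word norms -/

section WordNorm

variable {G : Type*} [Group G] {S : Finset G}

/-- The alphabet of the word norm: the elements of `S` and their inverses. -/
def letters (S : Finset G) : Set G := {x | x ∈ S ∨ x⁻¹ ∈ S}

theorem letters_finite (S : Finset G) : (letters S).Finite :=
  S.finite_toSet.union S.finite_toSet.inv

theorem inv_mem_letters {x : G} (hx : x ∈ letters S) : x⁻¹ ∈ letters S :=
  hx.symm.imp id fun h => (inv_inv x).symm ▸ h

theorem wordNorm_prod_le_length {l : List G} (hl : ∀ x ∈ l, x ∈ letters S) :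
    wordNorm S l.prod ≤ l.length :=
  Nat.sInf_le ⟨l, rfl, hl, rfl⟩

theorem exists_list_prod_eq (hgen : Subgroup.closure (S : Set G) = ⊤) (g : G) :
    ∃ l : List G, (∀ x ∈ l, x ∈ letters S) ∧ l.prod = g := by
  have hg : g ∈ (Subgroup.closure (S : Set G)).toSubmonoid := hgen ▸ Subgroup.mem_top g
  rw [Subgroup.closure_toSubmonoid] at hg
  exact Submonoid.exists_list_of_mem_closure hg

theorem exists_list_prod_eq_and_length_eq (hgen : Subgroup.closure (S : Set G) = ⊤) (g : G) :
    ∃ l : List G, (∀ x ∈ l, x ∈ letters S) ∧ l.prod = g ∧ l.length = wordNorm S g := by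
  obtain ⟨l, hl, hprod⟩ := exists_list_prod_eq hgen g
  obtain ⟨l', hlen, hl', hprod'⟩ := Nat.sInf_mem (s := {n | ∃ l : List G,
    l.length = n ∧ (∀ x ∈ l, x ∈ S ∨ x⁻¹ ∈ S) ∧ l.prod = g}) ⟨_, l, rfl, hl, hprod⟩
  exact ⟨l', hl', hprod', hlen⟩

@[simp]
theorem wordNorm_one : wordNorm S (1 : G) = 0 :=
  Nat.le_zero.1 (wordNorm_prod_le_length (l := []) (by simp))

theorem wordNorm_mul_le (hgen : Subgroup.closure (S : Set G) = ⊤) (x y : G) :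
    wordNorm S (x * y) ≤ wordNorm S x + wordNorm S y := by
  obtain ⟨l, hl, rfl, hlen⟩ := exists_list_prod_eq_and_length_eq hgen x
  obtain ⟨l', hl', rfl, hlen'⟩ := exists_list_prod_eq_and_length_eq hgen y
  rw [← hlen, ← hlen', ← List.length_append, ← List.prod_append]
  exact wordNorm_prod_le_length fun a ha => (List.mem_append.1 ha).elim (hl a) (hl' a)

theorem wordNorm_inv_le (hgen : Subgroup.closure (S : Set G) = ⊤) (x : G) :
    wordNorm S x⁻¹ ≤ wordNorm S x := by
  obtain ⟨l, hl, rfl, hlen⟩ := exists_list_prod_eq_and_length_eq hgen x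
  rw [← hlen, List.prod_inv_reverse]
  refine (wordNorm_prod_le_length fun a ha => ?_).trans (by simp)
  obtain ⟨b, hb, rfl⟩ := List.mem_map.1 (List.mem_reverse.1 ha)
  exact inv_mem_letters (hl b hb)

theorem wordNorm_pow_le (hgen : Subgroup.closure (S : Set G) = ⊤) (x : G) (n : ℕ) :
    wordNorm S (x ^ n) ≤ n * wordNorm S x := by
  induction n with
  | zero => simp
  | succ n ih =>
    rw [pow_succ, add_one_mul]
    exact (wordNorm_mul_le hgen _ _).trans (by gcongr)

theorem wordNorm_zpow_le (hgen : Subgroup.closure (S : Set G) = ⊤) (x : G) (j : ℤ) :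
    wordNorm S (x ^ j) ≤ j.natAbs * wordNorm S x := by
  obtain ⟨n, rfl | rfl⟩ := j.eq_nat_or_neg
  · simpa using wordNorm_pow_le hgen x n
  · simpa using (wordNorm_inv_le hgen (x ^ n)).trans (wordNorm_pow_le hgen x n)

theorem exists_letter_mul_eq (hgen : Subgroup.closure (S : Set G) = ⊤) {x : G} (hx : x ≠ 1) :
    ∃ a ∈ letters S, ∃ y, a * y = x ∧ wordNorm S x = wordNorm S y + 1 := by
  obtain ⟨l, hl, rfl, hlen⟩ := exists_list_prod_eq_and_length_eq hgen x
  match l with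
  | [] => exact absurd List.prod_nil hx
  | a :: l =>
    have ha : wordNorm S a ≤ 1 := by
      simpa using wordNorm_prod_le_length (l := [a]) (by simpa using hl a (by simp))
    have hl_le := wordNorm_prod_le_length fun b hb => hl b (List.mem_cons_of_mem a hb)
    have hle := wordNorm_mul_le hgen a l.prod
    rw [List.prod_cons, List.length_cons] at hlen
    refine ⟨a, hl a (by simp), l.prod, List.prod_cons.symm, ?_⟩
    rw [List.prod_cons]
    lia

theorem wordNorm_induction (hgen : Subgroup.closure (S : Set G) = ⊤) {P : ℕ → G → Prop}
    (one : P 0 1)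
    (letter_mul : ∀ a ∈ letters S, ∀ y, P (wordNorm S y) y → P (wordNorm S y + 1) (a * y))
    (x : G) : P (wordNorm S x) x := by
  induction h : wordNorm S x generalizing x with
  | zero =>
    by_cases hx : x = 1
    · exact hx ▸ one
    · obtain ⟨a, -, y, -, hxy⟩ := exists_letter_mul_eq hgen hx
      lia
  | succ n ih =>
    have hx : x ≠ 1 := by rintro rfl; simp at h
    obtain ⟨a, ha, y, rfl, hxy⟩ := exists_letter_mul_eq hgen hx
    obtain rfl : wordNorm S y = n := by lia
    exact letter_mul a ha y (ih y rfl)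

theorem wordNorm_eq_zero (hgen : Subgroup.closure (S : Set G) = ⊤) {x : G} :
    wordNorm S x = 0 ↔ x = 1 := by
  refine ⟨fun hx => by_contra fun h => ?_, fun h => h ▸ wordNorm_one⟩
  obtain ⟨a, -, y, -, hxy⟩ := exists_letter_mul_eq hgen h
  lia

theorem finite_setOf_wordNorm_le (hgen : Subgroup.closure (S : Set G) = ⊤) (n : ℕ) :
    {x : G | wordNorm S x ≤ n}.Finite := by
  induction n with
  | zero => exact (Set.finite_singleton 1).subset fun x hx =>
      (wordNorm_eq_zero hgen).1 (Nat.le_zero.1 hx)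
  | succ n ih =>
    refine ((Set.finite_singleton 1).union (Set.Finite.image2 (· * ·) (letters_finite S) ih)).subset
      fun x hx => or_iff_not_imp_left.2 fun hx1 => ?_
    obtain ⟨a, ha, y, rfl, hxy⟩ := exists_letter_mul_eq hgen hx1
    exact ⟨a, ha, y, by simpa [hxy] using hx, rfl⟩

theorem exists_letters_le (S : Finset G) (p : G → ℕ) : ∃ C, ∀ a ∈ letters S, p a ≤ C :=
  let ⟨C, hC⟩ := ((letters_finite S).image p).bddAbove
  ⟨C, fun a ha => hC ⟨a, ha, rfl⟩⟩

theorem exists_le_mul_wordNorm (hgen : Subgroup.closure (S : Set G) = ⊤) {p : G → ℕ}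
    (hp_one : p 1 = 0) (hp_mul : ∀ x y, p (x * y) ≤ p x + p y) :
    ∃ C, ∀ x, p x ≤ C * wordNorm S x := by
  obtain ⟨C, hC⟩ := exists_letters_le S p
  refine ⟨C, wordNorm_induction hgen (P := fun m x => p x ≤ C * m) (by simp [hp_one]) ?_⟩
  intro a ha y ih
  linarith [hC a ha, hp_mul a y]

theorem exists_natAbs_le_mul_wordNorm (hgen : Subgroup.closure (S : Set G) = ⊤)
    (p : G →* Multiplicative ℤ) : ∃ C, ∀ x, (p x).toAdd.natAbs ≤ C * wordNorm S x :=
  exists_le_mul_wordNorm hgen (by simp) fun x y => by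
    simpa using Int.natAbs_add_le (p x).toAdd (p y).toAdd

theorem exists_wordNorm_map_le (hgen : Subgroup.closure (S : Set G) = ⊤) (φ : G →* G) :
    ∃ C, ∀ x, wordNorm S (φ x) ≤ C * wordNorm S x :=
  exists_le_mul_wordNorm hgen (by simp) fun x y => by
    simpa using wordNorm_mul_le hgen (φ x) (φ y)

theorem exists_le_mul_wordNorm_sq (hgen : Subgroup.closure (S : Set G) = ⊤) {p : G → ℕ}
    {B : G → G → ℕ} (hp_one : p 1 = 0) (hp_mul : ∀ x y, p (x * y) ≤ p x + p y + B x y)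
    (hB_one : ∀ x, B x 1 = 0) (hB_mul : ∀ x y w, B x (y * w) ≤ B x y + B x w) :
    ∃ C, ∀ x, p x ≤ C * wordNorm S x ^ 2 := by
  choose K hK using fun a => exists_le_mul_wordNorm hgen (hB_one a) (hB_mul a)
  obtain ⟨C, hC⟩ := exists_letters_le S fun a => p a + K a
  refine ⟨C, wordNorm_induction hgen (P := fun m x => p x ≤ C * m ^ 2) (by simp [hp_one]) ?_⟩
  intro a ha y ih
  have hpa : p a ≤ C := (Nat.le_add_right _ _).trans (hC a ha)
  have hBa : B a y ≤ C * wordNorm S y :=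
    (hK a y).trans (Nat.mul_le_mul_right _ ((Nat.le_add_left _ _).trans (hC a ha)))
  nlinarith [hp_mul a y]

theorem exists_map_eq_sum_zsmul {A ι : Type*} [AddCommGroup A]
    (hgen : Subgroup.closure (S : Set G) = ⊤) (p : G →* Multiplicative A) (u : ι → G) (k : ι → ℤ)
    (s : Finset ι) : ∃ h : G, (p h).toAdd = ∑ i ∈ s, k i • (p (u i)).toAdd ∧
      wordNorm S h ≤ ∑ i ∈ s, (k i).natAbs * wordNorm S (u i) := by
  classical
  induction s using Finset.induction_on with
  | empty => exact ⟨1, by simp⟩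
  | insert i s hi ih =>
    obtain ⟨h, hp, hnorm⟩ := ih
    refine ⟨u i ^ k i * h, by simp [hp, Finset.sum_insert hi], ?_⟩
    rw [Finset.sum_insert hi]
    exact (wordNorm_mul_le hgen _ _).trans (add_le_add (wordNorm_zpow_le hgen _ _) hnorm)

theorem wordNorm_mul_zpow_mul_zpow_le (hgen : Subgroup.closure (S : Set G) = ⊤) {r a b : G}
    {i k : ℤ} {C n : ℕ} (hr : wordNorm S r ≤ n) (hi : i.natAbs ≤ C * n) (hk : k.natAbs ≤ C * n) :
    wordNorm S (r * a ^ i * b ^ k) ≤ (1 + C * wordNorm S a + C * wordNorm S b) * n :=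
  calc wordNorm S (r * a ^ i * b ^ k)
      ≤ wordNorm S r + wordNorm S (a ^ i) + wordNorm S (b ^ k) :=
        (wordNorm_mul_le hgen _ _).trans (Nat.add_le_add_right (wordNorm_mul_le hgen _ _) _)
    _ ≤ n + C * n * wordNorm S a + C * n * wordNorm S b :=
      add_le_add (add_le_add hr ((wordNorm_zpow_le hgen a i).trans (Nat.mul_le_mul_right _ hi)))
        ((wordNorm_zpow_le hgen b k).trans (Nat.mul_le_mul_right _ hk))
    _ = (1 + C * wordNorm S a + C * wordNorm S b) * n := by ring

end WordNorm

/-! ### Twisted conjugacy growth -/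

section TwistedConjugacy

variable {G : Type*} [Group G] {S : Finset G} {ψ φ : G ≃* G}

namespace TwistedConj

variable {x y w : G}

protected theorem refl (ψ : G ≃* G) (x : G) : TwistedConj ψ x x := ⟨1, by simp⟩

protected theorem symm : TwistedConj ψ x y → TwistedConj ψ y x := by
  rintro ⟨g, rfl⟩
  exact ⟨g⁻¹, by simp [mul_assoc]⟩

protected theorem trans : TwistedConj ψ x y → TwistedConj ψ y w → TwistedConj ψ x w := by
  rintro ⟨g, rfl⟩ ⟨h, rfl⟩
  exact ⟨h * g, by simp [mul_assoc]⟩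

theorem setOf_eq_iff : {w | TwistedConj ψ x w} = {w | TwistedConj ψ y w} ↔ TwistedConj ψ x y where
  mp h := (h ▸ TwistedConj.refl ψ y : y ∈ {w | TwistedConj ψ x w})
  mpr h := Set.ext fun _ => ⟨h.symm.trans, h.trans⟩

end TwistedConj

theorem twistedGrowth_mono (hgen : Subgroup.closure (S : Set G) = ⊤) (ψ : G ≃* G) :
    Monotone (twistedGrowth ψ S) := fun _ n hmn =>
  Set.ncard_le_ncard (Set.image_mono fun _ hx => le_trans hx hmn)
    ((finite_setOf_wordNorm_le hgen n).image _)

theorem twistedGrowth_zero (hgen : Subgroup.closure (S : Set G) = ⊤) (ψ : G ≃* G) :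
    twistedGrowth ψ S 0 = 1 := by
  have hball : {g : G | wordNorm S g ≤ 0} = {1} := by
    ext g
    simp [wordNorm_eq_zero hgen]
  rw [twistedGrowth, hball, Set.image_singleton, Set.ncard_singleton]

theorem twistedGrowth_le_card_mul {ι : Type*} [Fintype ι]
    (hgen : Subgroup.closure (S : Set G) = ⊤) {m n : ℕ} (F : G → G) (t : G → ι)
    (hF : ∀ x, wordNorm S x ≤ n → wordNorm S (F x) ≤ m)
    (hinj : ∀ x y, wordNorm S x ≤ n → wordNorm S y ≤ n → t x = t y →
      TwistedConj φ (F x) (F y) → TwistedConj ψ x y) :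
    twistedGrowth ψ S n ≤ Fintype.card ι * twistedGrowth φ S m := by
  set ball : Set G := {g | wordNorm S g ≤ n}
  set rep : Set G → G := Function.invFunOn (fun x => {y | TwistedConj ψ x y}) ball
  have hrep_mem {c} (hc : c ∈ (fun x => {y | TwistedConj ψ x y}) '' ball) : rep c ∈ ball :=
    Function.invFunOn_mem hc
  have hrep_eq {c} (hc : c ∈ (fun x => {y | TwistedConj ψ x y}) '' ball) :
      {y | TwistedConj ψ (rep c) y} = c := Function.invFunOn_eq hc
  have hcard : (Set.univ : Set ι).ncard = Fintype.card ι := by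
    rw [Set.ncard_univ, Nat.card_eq_fintype_card]
  rw [← hcard, twistedGrowth, twistedGrowth, ← Set.ncard_prod]
  refine Set.ncard_le_ncard_of_injOn (fun c => (t (rep c), {y | TwistedConj φ (F (rep c)) y}))
    (fun c hc => ⟨Set.mem_univ _, F (rep c), hF _ (hrep_mem hc), rfl⟩) ?_
    (Set.finite_univ.prod ((finite_setOf_wordNorm_le hgen m).image _))
  intro c hc c' hc' hcc'
  rw [Prod.mk.injEq, TwistedConj.setOf_eq_iff] at hcc'
  rw [← hrep_eq hc, ← hrep_eq hc', TwistedConj.setOf_eq_iff]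
  exact hinj _ _ (hrep_mem hc) (hrep_mem hc') hcc'.1 hcc'.2

theorem growthLE_of_twistedGrowth_le (hgen : Subgroup.closure (S : Set G) = ⊤) {c K : ℕ}
    (h : ∀ n, 0 < n → twistedGrowth ψ S n ≤ K * twistedGrowth φ S (c * n)) :
    GrowthLE (fun n => (twistedGrowth ψ S n : ℝ)) (fun n => (twistedGrowth φ S n : ℝ)) := by
  refine ⟨c + K + 1, by lia, fun n => ?_⟩
  have hone : 1 ≤ (c + K + 1) * max 1 (twistedGrowth φ S ((c + K + 1) * n)) :=
    Nat.mul_pos (by lia) (by simp)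
  have hle : twistedGrowth ψ S n ≤
      (c + K + 1) * max 1 (twistedGrowth φ S ((c + K + 1) * n)) := by
    obtain rfl | hn := n.eq_zero_or_pos
    · rwa [twistedGrowth_zero hgen]
    · refine (h n hn).trans (Nat.mul_le_mul (by lia) (le_max_of_le_right ?_))
      exact twistedGrowth_mono hgen φ (Nat.mul_le_mul_right n (by lia))
  beta_reduce
  exact_mod_cast max_le hone hle

end TwistedConjugacy

/-! ### Lattices and alternating forms -/

section Lattices

open Module

theorem exists_extension_smul {R M : Type*} [CommRing R] [IsDomain R] [IsPrincipalIdealRing R]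
    [AddCommGroup M] [Module R M] [Module.Free R M] [Module.Finite R M] (N : Submodule R M)
    (φ : N →ₗ[R] R) : ∃ d : R, d ≠ 0 ∧ ∃ Φ : M →ₗ[R] R, ∀ x : N, Φ x = d * φ x := by
  obtain ⟨n, ⟨bM, bN, f, a, ha⟩⟩ := Submodule.smithNormalForm (Free.chooseBasis R M) N
  have ha_ne (i : Fin n) : a i ≠ 0 := fun h =>
    bN.ne_zero i (Subtype.ext (by rw [ha, h, zero_smul, Submodule.coe_zero]))
  refine ⟨∏ i, a i, Finset.prod_ne_zero_iff.2 fun i _ => ha_ne i, bM.constr R fun k =>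
    ∑ i, if f i = k then (∏ j ∈ Finset.univ.erase i, a j) * φ (bN i) else 0, fun x => ?_⟩
  suffices hcomp : (bM.constr R _) ∘ₗ N.subtype = (∏ i, a i) • φ from LinearMap.congr_fun hcomp x
  refine bN.ext fun i => ?_
  have hprod : a i * ∏ j ∈ Finset.univ.erase i, a j = ∏ j, a j :=
    Finset.mul_prod_erase _ _ (Finset.mem_univ i)
  simp [ha, f.injective.eq_iff, ← hprod, mul_assoc]

theorem exists_bilin_apply_eq_smul {R M N : Type*} [CommRing R] [IsDomain R]
    [IsPrincipalIdealRing R] [AddCommGroup M] [Module R M] [AddCommGroup N] [Module R N]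
    [Module.Free R N] [Module.Finite R N] (B : M →ₗ[R] N →ₗ[R] R) (τ : M →ₗ[R] R)
    (hτ : LinearMap.ker B ≤ LinearMap.ker τ) :
    ∃ d : R, d ≠ 0 ∧ ∃ w : N, ∀ v, B v w = d * τ v := by
  obtain ⟨d, hd, Φ, hΦ⟩ := exists_extension_smul (LinearMap.range B)
    ((LinearMap.ker B).liftQ τ hτ ∘ₗ B.quotKerEquivRange.symm.toLinearMap)
  refine ⟨d, hd, (evalEquiv R N).symm Φ, fun v => ?_⟩
  have hv := hΦ ⟨B v, LinearMap.mem_range_self B v⟩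
  rw [← LinearMap.quotKerEquivRange_apply_mk] at hv
  simpa using hv

theorem exists_sub_flip_eq_of_isAlt {R M : Type*} [CommRing R] [AddCommGroup M] [Module R M]
    [Module.Free R M] [Module.Finite R M] {ω : M →ₗ[R] M →ₗ[R] R} (hω : ω.IsAlt) :
    ∃ β : M →ₗ[R] M →ₗ[R] R, β - β.flip = ω := by
  obtain h | h := subsingleton_or_nontrivial R
  · exact ⟨0, by ext; exact Subsingleton.elim _ _⟩
  let b := finBasis R M
  refine ⟨b.constr R fun i => b.constr R fun j => if j < i then ω (b i) (b j) else 0, ?_⟩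
  refine b.ext fun i => b.ext fun j => ?_
  simp only [LinearMap.sub_apply, LinearMap.flip_apply, Basis.constr_basis]
  rcases lt_trichotomy i j with hij | rfl | hij
  · simp [hij, hij.not_gt, hω.neg]
  · simp [hω.self_eq_zero]
  · simp [hij, hij.not_gt]

theorem exists_pair_linearIndependent_of_isAlt {R M : Type*} [CommRing R] [IsDomain R]
    [AddCommGroup M] [Module R M] [IsTorsionFree R M] {T : M →ₗ[R] M} {ω : M →ₗ[R] M →ₗ[R] R}
    (hT : T ≠ 0) (hω : ω ≠ 0) (hω_alt : ω.IsAlt)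
    (horth : ∀ u ∈ LinearMap.ker T, ∀ v ∈ LinearMap.range T, ω u v = 0) :
    ∃ a ∈ LinearMap.range T, ∃ b, LinearIndependent R ![a, b] ∧
      (b ∈ LinearMap.range T ∨ ∃ u ∈ LinearMap.ker T, ω u b ≠ 0) := by
  by_cases hker : ∀ u ∈ LinearMap.ker T, ω u = 0
  · obtain ⟨u, v, huv⟩ : ∃ u v, ω u v ≠ 0 := by
      contrapose! hω
      exact LinearMap.ext₂ hω
    have hvu : ω v u ≠ 0 := by rwa [← hω_alt.neg, neg_ne_zero]
    refine ⟨T u, ⟨u, rfl⟩, T v, LinearIndependent.pair_iff.2 fun s t hst => ?_, .inl ⟨v, rfl⟩⟩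
    have hω_st : ω (s • u + t • v) = 0 := hker _ (by simpa using hst)
    have hs := LinearMap.congr_fun hω_st v
    have ht := LinearMap.congr_fun hω_st u
    simp only [map_add, map_smul, LinearMap.add_apply, LinearMap.smul_apply, hω_alt.self_eq_zero,
      smul_eq_mul, mul_zero, add_zero, zero_add, LinearMap.zero_apply, mul_eq_zero, huv, hvu,
      or_false] at hs ht
    exact ⟨hs, ht⟩
  · push Not at hker
    obtain ⟨u, hu, hωu⟩ := hker
    obtain ⟨b, hub⟩ : ∃ b, ω u b ≠ 0 := by
      contrapose! hωu
      exact LinearMap.ext hωu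
    obtain ⟨v, hv⟩ : ∃ v, T v ≠ 0 := by
      contrapose! hT
      exact LinearMap.ext hT
    refine ⟨T v, ⟨v, rfl⟩, b, LinearIndependent.pair_iff.2 fun s t hst => ?_, .inr ⟨u, hu, hub⟩⟩
    have ht : t = 0 := by
      simpa [horth u hu (T v) ⟨v, rfl⟩, hub] using congrArg (ω u) hst
    subst ht
    exact ⟨by simpa [hv] using hst, rfl⟩

end Lattices

/-! ### Central extensions by an infinite cyclic group -/

/-- A central extension `1 → ⟨z⟩ → G → V → 0` of an abelian group by an infinite cyclic group.
The quotient map takes values in `Multiplicative V` so that it is a `MonoidHom`; its additive form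
is `HeisenbergExtension.π`. -/
structure HeisenbergExtension (G V : Type*) [Group G] [AddCommGroup V] where
  z : G
  z_mem_center : z ∈ Subgroup.center G
  zpow_injective : Function.Injective fun j : ℤ => z ^ j
  proj : G →* Multiplicative V
  proj_surjective : Function.Surjective proj
  ker_proj : proj.ker = Subgroup.zpowers z

namespace HeisenbergExtension

variable {G V : Type*} [Group G] [AddCommGroup V] (E : HeisenbergExtension G V)

/-- The quotient map `G → V` of the extension, written additively. -/
def π (g : G) : V := (E.proj g).toAdd

@[simp] theorem π_one : E.π 1 = 0 := by simp [π]

@[simp] theorem π_mul (x y : G) : E.π (x * y) = E.π x + E.π y := by simp [π]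

@[simp] theorem π_inv (x : G) : E.π x⁻¹ = -E.π x := by simp [π]

@[simp] theorem π_zpow (x : G) (j : ℤ) : E.π (x ^ j) = j • E.π x := by simp [π]

theorem π_surjective : Function.Surjective E.π := E.proj_surjective

theorem π_eq_zero_iff {x : G} : E.π x = 0 ↔ ∃ j : ℤ, E.z ^ j = x := by
  rw [← Subgroup.mem_zpowers_iff, ← E.ker_proj]
  rfl

@[simp] theorem π_z : E.π E.z = 0 := E.π_eq_zero_iff.2 ⟨1, zpow_one _⟩

theorem π_eq_iff {x y : G} : E.π x = E.π y ↔ ∃ j : ℤ, x = y * E.z ^ j := by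
  rw [← sub_eq_zero, ← neg_add_eq_sub, ← π_inv, ← π_mul, π_eq_zero_iff]
  simp [eq_inv_mul_iff_mul_eq, eq_comm]

theorem mul_zpow_z (x : G) (j : ℤ) : x * E.z ^ j = E.z ^ j * x :=
  Subgroup.mem_center_iff.1 (zpow_mem E.z_mem_center j) x

theorem mul_zpow_z_mul (x y : G) (j : ℤ) : x * E.z ^ j * y = x * y * E.z ^ j := by
  rw [mul_assoc, ← mul_zpow_z, ← mul_assoc]

theorem π_eq_of_twistedConj_refl {x y : G} (h : TwistedConj (MulEquiv.refl G) x y) :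
    E.π x = E.π y := by
  obtain ⟨g, rfl⟩ := h
  simp

/-- The exponent `j` of an element `z ^ j` of the kernel (a junk value outside the kernel). -/
noncomputable def zlog (g : G) : ℤ := Function.invFun (fun j : ℤ => E.z ^ j) g

@[simp] theorem zlog_zpow (j : ℤ) : E.zlog (E.z ^ j) = j :=
  Function.leftInverse_invFun E.zpow_injective j

theorem zpow_zlog {g : G} (hg : E.π g = 0) : E.z ^ E.zlog g = g := by
  obtain ⟨j, rfl⟩ := E.π_eq_zero_iff.1 hg
  rw [zlog_zpow]

theorem zpow_z_eq_iff {i j : ℤ} : E.z ^ i = E.z ^ j ↔ i = j := E.zpow_injective.eq_iff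

/-- The linear map on `V` induced by a homomorphism on `G` that kills `z`. -/
noncomputable def descend {A : Type*} [AddCommGroup A] (p : G →* Multiplicative A)
    (hp : p E.z = 1) : V →ₗ[ℤ] A :=
  (AddMonoidHom.toMultiplicative.symm (E.proj.liftOfSurjective E.proj_surjective
    ⟨p, by rwa [E.ker_proj, Subgroup.zpowers_le]⟩)).toIntLinearMap

@[simp] theorem descend_π {A : Type*} [AddCommGroup A] (p : G →* Multiplicative A)
    (hp : p E.z = 1) (g : G) : E.descend p hp (E.π g) = (p g).toAdd :=
  congrArg Multiplicative.toAdd (MonoidHom.liftOfRightInverse_comp_apply E.proj _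
    (Function.rightInverse_surjInv E.proj_surjective) ⟨p, _⟩ g)

/-- The exponent of `z` in the commutator `g * x * g⁻¹ * x⁻¹`; it descends to the bilinear
form `HeisenbergExtension.form`. -/
noncomputable def commExp (g x : G) : ℤ := E.zlog (g * x * g⁻¹ * x⁻¹)

theorem conj_eq_mul_zpow_iff {g x : G} {j : ℤ} :
    g * x * g⁻¹ = x * E.z ^ j ↔ E.commExp g x = j := by
  rw [← E.zpow_z_eq_iff, commExp, E.zpow_zlog (by simp), mul_zpow_z, ← mul_inv_eq_iff_eq_mul]

theorem conj_eq_mul_zpow_commExp (g x : G) : g * x * g⁻¹ = x * E.z ^ E.commExp g x :=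
  E.conj_eq_mul_zpow_iff.2 rfl

theorem commExp_mul_right (g x y : G) :
    E.commExp g (x * y) = E.commExp g x + E.commExp g y := by
  rw [← conj_eq_mul_zpow_iff, ← conj_mul, E.conj_eq_mul_zpow_commExp, E.conj_eq_mul_zpow_commExp,
    ← mul_assoc, mul_zpow_z_mul, mul_assoc, ← zpow_add, add_comm]

theorem commExp_mul_left (g h x : G) :
    E.commExp (g * h) x = E.commExp g x + E.commExp h x := by
  rw [← conj_eq_mul_zpow_iff]
  calc g * h * x * (g * h)⁻¹ = g * (h * x * h⁻¹) * g⁻¹ := by simp only [mul_inv_rev, mul_assoc]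
    _ = g * x * g⁻¹ * E.z ^ E.commExp h x := by
      rw [E.conj_eq_mul_zpow_commExp h, ← mul_assoc, mul_zpow_z_mul]
    _ = x * E.z ^ (E.commExp g x + E.commExp h x) := by
      rw [E.conj_eq_mul_zpow_commExp, mul_assoc, zpow_add]

theorem commExp_z_right (g : G) : E.commExp g E.z = 0 := by
  simpa [← conj_eq_mul_zpow_iff] using mul_inv_eq_of_eq_mul (E.mul_zpow_z g 1)

theorem commExp_z_left (x : G) : E.commExp E.z x = 0 := by
  simpa [← conj_eq_mul_zpow_iff] using mul_inv_eq_of_eq_mul (E.mul_zpow_z x 1).symm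

/-- The functional on `V` induced by `E.commExp g`. -/
noncomputable def commFunctional (g : G) : V →ₗ[ℤ] ℤ :=
  E.descend (.mk' (fun x => .ofAdd (E.commExp g x)) fun x y => by
    rw [commExp_mul_right, ofAdd_add]) (congrArg Multiplicative.ofAdd (E.commExp_z_right g))

@[simp] theorem commFunctional_π (g x : G) : E.commFunctional g (E.π x) = E.commExp g x :=
  E.descend_π _ _ x

theorem commFunctional_mul (g h : G) :
    E.commFunctional (g * h) = E.commFunctional g + E.commFunctional h := by
  refine LinearMap.ext fun v => ?_
  obtain ⟨x, rfl⟩ := E.π_surjective v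
  simp [commExp_mul_left]

theorem commFunctional_z : E.commFunctional E.z = 0 := by
  refine LinearMap.ext fun v => ?_
  obtain ⟨x, rfl⟩ := E.π_surjective v
  simp [commExp_z_left]

/-- The commutator form of the extension, an alternating bilinear form on `V`. -/
noncomputable def form : V →ₗ[ℤ] V →ₗ[ℤ] ℤ :=
  E.descend (.mk' (fun g => .ofAdd (E.commFunctional g)) fun g h => by
    rw [commFunctional_mul, ofAdd_add]) (congrArg Multiplicative.ofAdd E.commFunctional_z)

@[simp] theorem form_π (g x : G) : E.form (E.π g) (E.π x) = E.commExp g x :=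
  (LinearMap.congr_fun (E.descend_π _ _ g) _).trans (E.commFunctional_π g x)

theorem conj_eq_mul_zpow_form (g x : G) : g * x * g⁻¹ = x * E.z ^ E.form (E.π g) (E.π x) := by
  rw [form_π, ← E.conj_eq_mul_zpow_commExp]

theorem mul_eq_mul_mul_zpow_form (x y : G) : x * y = y * x * E.z ^ E.form (E.π x) (E.π y) := by
  rw [← E.mul_zpow_z_mul y x, ← E.conj_eq_mul_zpow_form, inv_mul_cancel_right]

theorem form_isAlt : E.form.IsAlt := fun v => by
  obtain ⟨x, rfl⟩ := E.π_surjective v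
  rw [form_π, ← E.conj_eq_mul_zpow_iff]
  simp

theorem form_ne_zero {n : ℕ} (hn : 0 < n) (hz : E.z ^ n ∈ commutator G) : E.form ≠ 0 := by
  intro hform
  have hbot : commutator G = ⊥ := (commutator_eq_bot_iff_center_eq_top G).2 <|
    (Subgroup.eq_top_iff' _).2 fun x => Subgroup.mem_center_iff.2 fun y => by
      rw [E.mul_eq_mul_mul_zpow_form y x, hform]
      simp
  rw [hbot, Subgroup.mem_bot, ← zpow_natCast, ← zpow_zero E.z, E.zpow_z_eq_iff] at hz
  lia

/-- When `β v w - β w v` is the commutator form, dividing the product of `G` by the cocycle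
`z ^ β` yields an abelian group structure on `G`. -/
@[reducible]
noncomputable def untwist {β : V →ₗ[ℤ] V →ₗ[ℤ] ℤ} (hβ : β - β.flip = E.form) : AddCommGroup G :=
  letI : Add G := ⟨fun x y => x * y * E.z ^ (-β (E.π x) (E.π y))⟩
  letI : Zero G := ⟨1⟩
  letI : Neg G := ⟨fun x => x⁻¹ * E.z ^ (-β (E.π x) (E.π x))⟩
  have add_def (x y : G) : x + y = x * y * E.z ^ (-β (E.π x) (E.π y)) := rfl
  have zero_def : (0 : G) = 1 := rfl
  { AddGroup.ofLeftAxioms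
      (fun x y w => by
        simp only [add_def, π_mul, π_zpow, π_z, smul_zero, add_zero, map_add, LinearMap.add_apply]
        rw [E.mul_zpow_z_mul, mul_assoc _ (E.z ^ _), ← mul_assoc x, mul_assoc _ (E.z ^ _),
          ← zpow_add, ← zpow_add, mul_assoc x]
        congr 2
        ring)
      (fun x => by simp [add_def, zero_def])
      (fun x => by
        simp only [add_def, zero_def, π_mul, π_inv, π_zpow, π_z, smul_zero, add_zero,
          map_neg, LinearMap.neg_apply]
        rw [E.mul_zpow_z_mul, inv_mul_cancel, one_mul, ← zpow_add, add_neg_cancel, zpow_zero]) with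
    add_comm x y := by
      have hform : E.form (E.π x) (E.π y) = β (E.π x) (E.π y) - β (E.π y) (E.π x) := by
        simp [← hβ]
      rw [add_def, add_def, E.mul_eq_mul_mul_zpow_form x y, mul_assoc, ← zpow_add, hform]
      congr 2
      ring }

theorem exists_quadratic_coordinate [Module.Free ℤ V] [Module.Finite ℤ V] :
    ∃ (f : G → ℤ) (β : V →ₗ[ℤ] V →ₗ[ℤ] ℤ),
      (∀ x y, f (x * y) = f x + f y + β (E.π x) (E.π y)) ∧ ∀ j : ℤ, f (E.z ^ j) = j := by
  obtain ⟨β, hβ⟩ := exists_sub_flip_eq_of_isAlt E.form_isAlt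
  let : AddCommGroup G := E.untwist hβ
  have add_def (x y : G) : x + y = x * y * E.z ^ (-β (E.π x) (E.π y)) := rfl
  have π_add (x y : G) : E.π (x + y) = E.π x + E.π y := by simp [add_def]
  let p : G →ₗ[ℤ] V := (AddMonoidHom.mk' E.π π_add).toIntLinearMap
  have hp (x : G) : p x = E.π x := rfl
  obtain ⟨s, hs⟩ := Module.projective_lifting_property p LinearMap.id E.π_surjective
  have π_s (v : V) : E.π (s v) = v := LinearMap.congr_fun hs v
  have hker (x : G) : E.π (x - s (E.π x)) = 0 := by
    rw [← hp, map_sub, hp, hp, π_s, sub_self]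
  have add_zpow (x : G) (j : ℤ) : x + E.z ^ j = x * E.z ^ j := by simp [add_def]
  have zpow_add_zpow (i j : ℤ) : E.z ^ i + E.z ^ j = E.z ^ (i + j) := by
    rw [add_zpow, zpow_add]
  refine ⟨fun x => E.zlog (x - s (E.π x)), β, fun x y => ?_, fun j => ?_⟩
  · rw [← E.zpow_z_eq_iff, E.zpow_zlog (hker _), ← zpow_add_zpow, ← zpow_add_zpow,
      E.zpow_zlog (hker x), E.zpow_zlog (hker y), π_mul, map_add]
    have hxy : x * y = x + y + E.z ^ β (E.π x) (E.π y) := by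
      rw [add_zpow, add_def, mul_assoc, ← zpow_add, neg_add_cancel, zpow_zero, mul_one]
    rw [hxy]
    abel
  · simp

theorem exists_natAbs_le_mul_wordNorm_zpow_sq [Module.Free ℤ V] [Module.Finite ℤ V] {S : Finset G}
    (hgen : Subgroup.closure (S : Set G) = ⊤) :
    ∃ C, ∀ j : ℤ, j.natAbs ≤ C * wordNorm S (E.z ^ j) ^ 2 := by
  obtain ⟨f, β, hf_mul, hf_zpow⟩ := E.exists_quadratic_coordinate
  obtain ⟨C, hC⟩ := exists_le_mul_wordNorm_sq hgen (p := fun x => (f x).natAbs)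
    (B := fun x y => (β (E.π x) (E.π y)).natAbs) (by simpa using hf_zpow 0)
    (fun x y => by rw [hf_mul]; lia) (fun x => by simp)
    (fun x y w => by rw [π_mul, map_add]; exact Int.natAbs_add_le _ _)
  exact ⟨C, fun j => by simpa only [hf_zpow] using hC (E.z ^ j)⟩

/-! ### Twisted conjugacy in central extensions -/

section Periods

variable {ψ : G ≃* G}

theorem twistedConj_mul_zpow_iff {x y : G} {i j : ℤ} :
    TwistedConj ψ (x * E.z ^ i) (y * E.z ^ j) ↔ TwistedConj ψ x (y * E.z ^ (j - i)) := by
  refine exists_congr fun g => ?_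
  rw [← mul_assoc, E.mul_zpow_z_mul, zpow_sub, ← mul_assoc, eq_mul_inv_iff_mul_eq]

/-- The exponents by which `x` can be shifted along the centre without leaving its `ψ`-twisted
conjugacy class. -/
def periods (ψ : G ≃* G) (x : G) : AddSubgroup ℤ where
  carrier := {j | TwistedConj ψ x (x * E.z ^ j)}
  zero_mem' := by simpa using TwistedConj.refl ψ x
  add_mem' {i j} hi hj := hi.trans (by simpa [twistedConj_mul_zpow_iff] using hj)
  neg_mem' {j} hj := by
    simpa using (E.twistedConj_mul_zpow_iff (j := 0)).1 (by simpa using hj.symm)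

theorem sub_mem_periods_iff {x : G} {i j : ℤ} :
    j - i ∈ E.periods ψ x ↔ TwistedConj ψ (x * E.z ^ i) (x * E.z ^ j) :=
  E.twistedConj_mul_zpow_iff.symm

theorem growthLE_of_forall_mem_periods {S : Finset G} (hgen : Subgroup.closure (S : Set G) = ⊤)
    {t : ℤ} (ht : t ≠ 0) (hper : ∀ x, t ∈ E.periods ψ x) :
    GrowthLE (fun n => (twistedGrowth ψ S n : ℝ))
      (fun n => (twistedGrowth (MulEquiv.refl G) S n : ℝ)) := by
  have : NeZero t.natAbs := ⟨Int.natAbs_ne_zero.2 ht⟩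
  obtain ⟨s, hs⟩ := E.π_surjective.hasRightInverse
  choose e he using fun x => E.π_eq_iff.1 (hs (E.π x)).symm
  refine growthLE_of_twistedGrowth_le hgen (c := 1) fun n _ =>
    twistedGrowth_le_card_mul hgen id (fun x => (e x : ZMod t.natAbs)) (by simp) ?_
  intro x y _ _ hexy hxy
  have hπ : E.π x = E.π y := E.π_eq_of_twistedConj_refl hxy
  rw [he x, he y, hπ, ← sub_mem_periods_iff]
  rw [ZMod.intCast_eq_intCast_iff_dvd_sub, Int.natAbs_dvd] at hexy
  obtain ⟨q, hq⟩ := hexy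
  rw [hq, mul_comm, ← smul_eq_mul]
  exact zsmul_mem (hper _) q

end Periods

section FixesCentre

variable {ψ : G ≃* G} (hψ : ψ E.z = E.z)

/-- The endomorphism `v ↦ v - ψ v` of `V`: twisted conjugation by `g` translates the image in `V`
by its value at `π g`. -/
noncomputable def displacement : V →ₗ[ℤ] V :=
  E.descend (E.proj / E.proj.comp ψ.toMonoidHom) (by simp [hψ])

@[simp] theorem displacement_π (g : G) :
    E.displacement hψ (E.π g) = E.π g - E.π (ψ g) :=
  E.descend_π _ _ g

theorem π_twisted_conj (g x : G) :
    E.π (g * x * (ψ g)⁻¹) = E.π x + E.displacement hψ (E.π g) := by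
  simp only [π_mul, π_inv, displacement_π]
  abel

theorem commExp_map (hψ : ψ E.z = E.z) (g x : G) : E.commExp (ψ g) (ψ x) = E.commExp g x := by
  rw [← E.conj_eq_mul_zpow_iff]
  simpa [hψ] using congrArg ψ (E.conj_eq_mul_zpow_commExp g x)

theorem form_eq_zero_of_mem_ker_of_mem_range {u v : V}
    (hu : u ∈ LinearMap.ker (E.displacement hψ)) (hv : v ∈ LinearMap.range (E.displacement hψ)) :
    E.form u v = 0 := by
  obtain ⟨w, rfl⟩ := hv
  obtain ⟨g, rfl⟩ := E.π_surjective u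
  obtain ⟨x, rfl⟩ := E.π_surjective w
  have hg : E.π g = E.π (ψ g) := by simpa [sub_eq_zero] using hu
  rw [displacement_π, map_sub, form_π, hg, form_π, E.commExp_map hψ, sub_self]

theorem mul_map_inv_congr (hψ : ψ E.z = E.z) {g h : G} (hgh : E.π g = E.π h) :
    g * (ψ g)⁻¹ = h * (ψ h)⁻¹ := by
  obtain ⟨j, rfl⟩ := E.π_eq_iff.1 hgh
  rw [map_mul, map_zpow, hψ, mul_inv_rev, mul_assoc, mul_inv_cancel_left]

theorem mul_map_inv_eq_zpow_zlog {g : G} (hg : E.π g ∈ LinearMap.ker (E.displacement hψ)) :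
    g * (ψ g)⁻¹ = E.z ^ E.zlog (g * (ψ g)⁻¹) :=
  (E.zpow_zlog (by simpa [sub_eq_add_neg] using hg)).symm

theorem zlog_mul_map_inv_mul {g h : G} (hg : E.π g ∈ LinearMap.ker (E.displacement hψ))
    (hh : E.π h ∈ LinearMap.ker (E.displacement hψ)) :
    E.zlog (g * h * (ψ (g * h))⁻¹) = E.zlog (g * (ψ g)⁻¹) + E.zlog (h * (ψ h)⁻¹) := by
  have hsplit : g * h * (ψ (g * h))⁻¹ = g * (h * (ψ h)⁻¹) * (ψ g)⁻¹ := by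
    simp [mul_assoc]
  rw [hsplit, E.mul_map_inv_eq_zpow_zlog hψ hh, E.mul_zpow_z_mul,
    E.mul_map_inv_eq_zpow_zlog hψ hg, ← zpow_add]
  simp only [zlog_zpow]

/-- The exponent of `z` in `g * (ψ g)⁻¹`, for `g` lying over the kernel of the displacement. -/
noncomputable def twist : LinearMap.ker (E.displacement hψ) →ₗ[ℤ] ℤ :=
  letI lift (u : V) : G := Function.surjInv E.π_surjective u
  have π_lift (u : V) : E.π (lift u) = u := Function.surjInv_eq E.π_surjective u
  AddMonoidHom.toIntLinearMap <| .mk' (fun u => E.zlog (lift u * (ψ (lift u))⁻¹)) fun u v => by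
    rw [← E.zlog_mul_map_inv_mul hψ (by simp only [π_lift, u.2]) (by simp only [π_lift, v.2]),
      E.mul_map_inv_congr hψ (g := lift ↑(u + v)) (h := lift u * lift v)
        (by simp only [π_mul, π_lift, Submodule.coe_add])]

theorem mul_map_inv_eq_zpow_twist {g : G} (hg : E.π g ∈ LinearMap.ker (E.displacement hψ)) :
    g * (ψ g)⁻¹ = E.z ^ E.twist hψ ⟨E.π g, hg⟩ := by
  rw [E.mul_map_inv_eq_zpow_zlog hψ hg]
  exact congrArg (fun h => E.z ^ E.zlog h)
    (E.mul_map_inv_congr hψ (Function.surjInv_eq E.π_surjective _).symm)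

/-- The character through which the elements lying over the kernel of the displacement act, by
`ψ`-twisted conjugation, on the fibre of `π` over `v`. -/
noncomputable def fibreChar (v : V) : LinearMap.ker (E.displacement hψ) →ₗ[ℤ] ℤ :=
  (E.form.flip v).domRestrict _ + E.twist hψ

@[simp] theorem fibreChar_apply (v : V) (u : LinearMap.ker (E.displacement hψ)) :
    E.fibreChar hψ v u = E.form u v + E.twist hψ u := rfl

theorem mul_mul_map_inv_eq_mul_zpow_fibreChar {g : G} (x : G)
    (hg : E.π g ∈ LinearMap.ker (E.displacement hψ)) :
    g * x * (ψ g)⁻¹ = x * E.z ^ E.fibreChar hψ (E.π x) ⟨E.π g, hg⟩ := by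
  calc g * x * (ψ g)⁻¹ = g * x * g⁻¹ * (g * (ψ g)⁻¹) := by group
    _ = x * E.z ^ E.fibreChar hψ (E.π x) ⟨E.π g, hg⟩ := by
      rw [E.conj_eq_mul_zpow_form, E.mul_map_inv_eq_zpow_twist hψ hg, mul_assoc, ← zpow_add,
        fibreChar_apply]

theorem fibreChar_mem_periods (x : G) (u : LinearMap.ker (E.displacement hψ)) :
    E.fibreChar hψ (E.π x) u ∈ E.periods ψ x := by
  obtain ⟨u, hu⟩ := u
  obtain ⟨g, rfl⟩ := E.π_surjective u
  exact ⟨g, E.mul_mul_map_inv_eq_mul_zpow_fibreChar hψ x hu⟩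

theorem form_eq_of_fibreChar_eq {v w : V} (h : E.fibreChar hψ v = E.fibreChar hψ w) {u : V}
    (hu : u ∈ LinearMap.ker (E.displacement hψ)) : E.form u v = E.form u w := by
  simpa using LinearMap.congr_fun h ⟨u, hu⟩

theorem sub_mem_range_of_add_smul_eq {a b v w : V} {i i' k k' : ℤ}
    (ha : a ∈ LinearMap.range (E.displacement hψ))
    (hb : b ∈ LinearMap.range (E.displacement hψ) ∨
      ∃ u ∈ LinearMap.ker (E.displacement hψ), E.form u b ≠ 0)
    (hvw : E.fibreChar hψ v = E.fibreChar hψ w ∨ k = k')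
    (h : v + i • a + k • b = w + i' • a + k' • b) :
    v - w ∈ LinearMap.range (E.displacement hψ) := by
  have hsub : v - w = (i' - i) • a + (k' - k) • b := by
    linear_combination (norm := module) h
  suffices hkb : (k' - k) • b ∈ LinearMap.range (E.displacement hψ) by
    rw [hsub]
    exact add_mem (Submodule.smul_mem _ _ ha) hkb
  obtain hb | ⟨u, hu, hub⟩ := hb
  · exact Submodule.smul_mem _ _ hb
  · suffices hk : k' - k = 0 by simp [hk]
    obtain hchar | rfl := hvw
    · have hform := congrArg (E.form u) hsub
      simpa [E.form_eq_of_fibreChar_eq hψ hchar hu, E.form_eq_zero_of_mem_ker_of_mem_range hψ hu ha,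
        hub] using hform
    · exact sub_self k

section Inner

variable {S : Finset G}

theorem growthLE_of_form_eq_mul_twist [Module.IsTorsionFree ℤ V]
    (hgen : Subgroup.closure (S : Set G) = ⊤)
    (hT : E.displacement hψ = 0) {d : ℤ} (hd : d ≠ 0) {w : V}
    (hw : ∀ u : LinearMap.ker (E.displacement hψ), E.form u w = d * E.twist hψ u) :
    GrowthLE (fun n => (twistedGrowth ψ S n : ℝ))
      (fun n => (twistedGrowth (MulEquiv.refl G) S n : ℝ)) := by
  obtain ⟨w, rfl⟩ := E.π_surjective w
  refine growthLE_of_twistedGrowth_le hgen (c := d.natAbs + wordNorm S w) fun n hn =>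
    twistedGrowth_le_card_mul hgen (fun x => x ^ d * w) (fun _ => ()) ?_ ?_
  · intro x hx
    calc wordNorm S (x ^ d * w) ≤ d.natAbs * wordNorm S x + wordNorm S w :=
          (wordNorm_mul_le hgen _ _).trans (Nat.add_le_add_right (wordNorm_zpow_le hgen x d) _)
      _ ≤ d.natAbs * n + wordNorm S w * n := by gcongr; exact Nat.le_mul_of_pos_right _ hn
      _ = (d.natAbs + wordNorm S w) * n := (add_mul _ _ _).symm
  · intro x y _ _ _ hxy
    have hπ : E.π x = E.π y := by
      simpa [hd] using E.π_eq_of_twistedConj_refl hxy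
    obtain ⟨j, rfl⟩ := E.π_eq_iff.1 hπ.symm
    obtain ⟨g, hg⟩ := hxy
    have hgker : E.π g ∈ LinearMap.ker (E.displacement hψ) := by rw [hT]; trivial
    refine ⟨g, ?_⟩
    have hcomm : (x * E.z ^ j) ^ d = x ^ d * E.z ^ (d * j) := by
      rw [(show Commute x (E.z ^ j) from E.mul_zpow_z x j).mul_zpow, ← zpow_mul, mul_comm j]
    have hexp : d * E.fibreChar hψ (E.π x) ⟨E.π g, hgker⟩ = d * j := by
      rw [MulEquiv.refl_apply, E.conj_eq_mul_zpow_form, hcomm, E.mul_zpow_z_mul, mul_right_inj,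
        E.zpow_z_eq_iff] at hg
      rw [← hg, fibreChar_apply, mul_add, ← hw, π_mul, map_add, π_zpow, map_smul, smul_eq_mul]
    rw [E.mul_mul_map_inv_eq_mul_zpow_fibreChar hψ x hgker, mul_left_cancel₀ hd hexp]

theorem growthLE_of_displacement_eq_zero [Module.Free ℤ V] [Module.Finite ℤ V]
    (hgen : Subgroup.closure (S : Set G) = ⊤) (hT : E.displacement hψ = 0) :
    GrowthLE (fun n => (twistedGrowth ψ S n : ℝ))
      (fun n => (twistedGrowth (MulEquiv.refl G) S n : ℝ)) := by
  by_cases hker : LinearMap.ker (E.form.domRestrict (LinearMap.ker (E.displacement hψ))) ≤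
      LinearMap.ker (E.twist hψ)
  · obtain ⟨d, hd, w, hw⟩ := exists_bilin_apply_eq_smul _ _ hker
    exact E.growthLE_of_form_eq_mul_twist hψ hgen hT hd hw
  · obtain ⟨u, hu, hτ⟩ := Set.not_subset.1 hker
    refine E.growthLE_of_forall_mem_periods hgen (t := E.twist hψ u) hτ fun x => ?_
    have hform : E.form u (E.π x) = 0 := LinearMap.congr_fun hu (E.π x)
    simpa [hform] using E.fibreChar_mem_periods hψ x u

end Inner

end FixesCentre

section DisplacementNeZero

variable {S : Finset G}

theorem exists_natAbs_apply_π_le_mul_wordNorm (hgen : Subgroup.closure (S : Set G) = ⊤)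
    (Φ : V →ₗ[ℤ] ℤ) : ∃ C, ∀ x, (Φ (E.π x)).natAbs ≤ C * wordNorm S x :=
  exists_natAbs_le_mul_wordNorm hgen (Φ.toAddMonoidHom.toMultiplicative.comp E.proj)

variable [Module.Free ℤ V] [Module.Finite ℤ V]

theorem exists_natAbs_apply_le_mul_wordNorm_of_submodule
    (hgen : Subgroup.closure (S : Set G) = ⊤) {W : Submodule ℤ V} (φ : W →ₗ[ℤ] ℤ) :
    ∃ C, ∀ x (hx : E.π x ∈ W), (φ ⟨E.π x, hx⟩).natAbs ≤ C * wordNorm S x := by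
  obtain ⟨d, hd, Φ, hΦ⟩ := exists_extension_smul W φ
  obtain ⟨C, hC⟩ := E.exists_natAbs_apply_π_le_mul_wordNorm hgen Φ
  refine ⟨C, fun x hx => le_trans ?_ (hC x)⟩
  rw [hΦ ⟨E.π x, hx⟩, Int.natAbs_mul]
  exact Nat.le_mul_of_pos_left _ (Int.natAbs_pos.2 hd)

theorem exists_wordNorm_preimage_le (hgen : Subgroup.closure (S : Set G) = ⊤) (T : V →ₗ[ℤ] V) :
    ∃ C, ∀ x, E.π x ∈ LinearMap.range T → ∃ h, T (E.π h) = E.π x ∧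
      wordNorm S h ≤ C * wordNorm S x := by
  let b := Module.Free.chooseBasis ℤ (LinearMap.range T)
  choose v hv using fun i => (b i).2
  choose u hu using fun i => E.π_surjective (v i)
  choose C hC using fun i => E.exists_natAbs_apply_le_mul_wordNorm_of_submodule hgen (b.coord i)
  refine ⟨∑ i, C i * wordNorm S (u i), fun x hx => ?_⟩
  obtain ⟨h, hπ, hnorm⟩ := exists_map_eq_sum_zsmul hgen E.proj u (b.repr ⟨E.π x, hx⟩) Finset.univ
  refine ⟨h, ?_, ?_⟩
  · change E.π h = ∑ i, _ • E.π (u i) at hπ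
    calc T (E.π h) = ∑ i, b.repr ⟨E.π x, hx⟩ i • (b i : V) := by simp [hπ, hu, hv]
      _ = ((∑ i, b.repr ⟨E.π x, hx⟩ i • b i : LinearMap.range T) : V) := by
        simp only [Submodule.coe_sum, Submodule.coe_smul]
      _ = E.π x := by rw [b.sum_repr]
  · calc wordNorm S h ≤ ∑ i, (b.repr ⟨E.π x, hx⟩ i).natAbs * wordNorm S (u i) := hnorm
      _ ≤ ∑ i, C i * wordNorm S x * wordNorm S (u i) := by
        gcongr with i
        exact hC i x hx
      _ = (∑ i, C i * wordNorm S (u i)) * wordNorm S x := by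
        rw [Finset.sum_mul]
        exact Finset.sum_congr rfl fun i _ => mul_right_comm _ _ _

variable {ψ : G ≃* G} (hψ : ψ E.z = E.z)

theorem exists_twistedConj_mul_zpow_natAbs_le (hgen : Subgroup.closure (S : Set G) = ⊤) :
    ∃ C, ∀ n x r, wordNorm S x ≤ n → wordNorm S r ≤ n →
      E.π r - E.π x ∈ LinearMap.range (E.displacement hψ) →
      ∃ j : ℤ, j.natAbs ≤ C * n ^ 2 ∧ TwistedConj ψ x (r * E.z ^ j) := by
  obtain ⟨A, hA⟩ := E.exists_wordNorm_preimage_le hgen (E.displacement hψ)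
  obtain ⟨B, hB⟩ := exists_wordNorm_map_le hgen ψ.toMonoidHom
  obtain ⟨D, hD⟩ := E.exists_natAbs_le_mul_wordNorm_zpow_sq hgen
  refine ⟨D * (2 + 2 * A + 2 * A * B) ^ 2, fun n x r hx hr hrange => ?_⟩
  obtain ⟨h, hπ, hnorm⟩ := hA (x⁻¹ * r) (by simpa [neg_add_eq_sub] using hrange)
  obtain ⟨j, hj⟩ : ∃ j : ℤ, h * x * (ψ h)⁻¹ = r * E.z ^ j :=
    E.π_eq_iff.1 (by rw [E.π_twisted_conj hψ, hπ]; simp)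
  refine ⟨j, ?_, h, hj⟩
  have hh : wordNorm S h ≤ A * (2 * n) := hnorm.trans <| Nat.mul_le_mul_left A <| by
    linarith [wordNorm_mul_le hgen x⁻¹ r, wordNorm_inv_le hgen x]
  have hψh : wordNorm S (ψ h)⁻¹ ≤ B * (A * (2 * n)) :=
    (wordNorm_inv_le hgen _).trans ((hB h).trans (Nat.mul_le_mul_left B hh))
  have hz : wordNorm S (E.z ^ j) ≤ (2 + 2 * A + 2 * A * B) * n := by
    rw [← inv_mul_eq_of_eq_mul hj]
    linarith [wordNorm_mul_le hgen r⁻¹ (h * x * (ψ h)⁻¹), wordNorm_mul_le hgen (h * x) (ψ h)⁻¹,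
      wordNorm_mul_le hgen h x, wordNorm_inv_le hgen r]
  calc j.natAbs ≤ D * wordNorm S (E.z ^ j) ^ 2 := hD j
    _ ≤ D * ((2 + 2 * A + 2 * A * B) * n) ^ 2 := by gcongr
    _ = D * (2 + 2 * A + 2 * A * B) ^ 2 * n ^ 2 := by ring

theorem exists_mem_periods_natAbs_le (hgen : Subgroup.closure (S : Set G) = ⊤) :
    ∃ C, ∀ n x, 0 < n → wordNorm S x ≤ n → E.fibreChar hψ (E.π x) ≠ 0 →
      ∃ N ∈ E.periods ψ x, N ≠ 0 ∧ N.natAbs ≤ C * n := by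
  let b := Module.Free.chooseBasis ℤ (LinearMap.ker (E.displacement hψ))
  choose A hA using fun i => E.exists_natAbs_apply_π_le_mul_wordNorm hgen (E.form (b i))
  refine ⟨∑ i, (A i + (E.twist hψ (b i)).natAbs), fun n x hn hx hne => ?_⟩
  obtain ⟨i, hi⟩ : ∃ i, E.fibreChar hψ (E.π x) (b i) ≠ 0 := by
    contrapose! hne
    exact b.ext hne
  refine ⟨_, E.fibreChar_mem_periods hψ x (b i), hi, ?_⟩
  calc (E.fibreChar hψ (E.π x) (b i)).natAbs
      ≤ (E.form (b i) (E.π x)).natAbs + (E.twist hψ (b i)).natAbs := Int.natAbs_add_le _ _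
    _ ≤ A i * n + (E.twist hψ (b i)).natAbs * n :=
      add_le_add ((hA i x).trans (by gcongr)) (Nat.le_mul_of_pos_right _ hn)
    _ = (A i + (E.twist hψ (b i)).natAbs) * n := (add_mul _ _ _).symm
    _ ≤ (∑ i, (A i + (E.twist hψ (b i)).natAbs)) * n := by
      gcongr
      exact Finset.single_le_sum (f := fun i => A i + (E.twist hψ (b i)).natAbs)
        (fun _ _ => Nat.zero_le _) (Finset.mem_univ i)

/-- Over `r` with trivial `fibreChar` the exponents of `z` have size `n ^ 2` and are split into two
digits in base `n`; otherwise a nonzero period leaves a single digit of size `n`. -/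
theorem exists_digits (hgen : Subgroup.closure (S : Set G) = ⊤) :
    ∃ C, ∀ n r, 0 < n → wordNorm S r ≤ n → ∃ M : ℤ, ∀ x, wordNorm S x ≤ n →
      E.π r - E.π x ∈ LinearMap.range (E.displacement hψ) →
      ∃ i k : ℤ, i.natAbs ≤ C * n ∧ k.natAbs ≤ C * n ∧ (E.fibreChar hψ (E.π r) ≠ 0 → k = 0) ∧
        TwistedConj ψ x (r * E.z ^ (i * M + k)) := by
  obtain ⟨A, hA⟩ := E.exists_twistedConj_mul_zpow_natAbs_le hψ hgen
  obtain ⟨B, hB⟩ := E.exists_mem_periods_natAbs_le hψ hgen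
  refine ⟨A + B + 1, fun n r hn hr => ?_⟩
  by_cases hchar : E.fibreChar hψ (E.π r) = 0
  · refine ⟨n, fun x hx hrange => ?_⟩
    obtain ⟨j, hj, hconj⟩ := hA n x r hx hr hrange
    refine ⟨j.tdiv n, j.tmod n, ?_, ?_, absurd hchar, by rwa [Int.tdiv_mul_add_tmod]⟩
    · rw [Int.natAbs_tdiv, Int.natAbs_natCast]
      exact Nat.div_le_of_le_mul (hj.trans (by nlinarith))
    · rw [Int.natAbs_tmod, Int.natAbs_natCast]
      nlinarith [Nat.mod_lt j.natAbs hn]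
  · obtain ⟨N, hN, hN0, hNle⟩ := hB n r hn hr hchar
    refine ⟨1, fun x hx hrange => ?_⟩
    obtain ⟨j, -, hconj⟩ := hA n x r hx hr hrange
    refine ⟨j.tmod N, 0, ?_, by simp, fun _ => rfl, hconj.trans ?_⟩
    · rw [Int.natAbs_tmod]
      nlinarith [Nat.mod_lt j.natAbs (Int.natAbs_pos.2 hN0)]
    · have hsub : j.tmod N * 1 + 0 - j = (-j.tdiv N) • N := by
        rw [smul_eq_mul]
        linarith [Int.tdiv_mul_add_tmod j N]
      rw [← sub_mem_periods_iff, hsub]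
      exact zsmul_mem hN _

theorem growthLE_of_displacement_ne_zero (hgen : Subgroup.closure (S : Set G) = ⊤)
    (hT : E.displacement hψ ≠ 0) (hform : E.form ≠ 0) :
    GrowthLE (fun n => (twistedGrowth ψ S n : ℝ))
      (fun n => (twistedGrowth (MulEquiv.refl G) S n : ℝ)) := by
  obtain ⟨α, hα, β, hli, hβ⟩ := exists_pair_linearIndependent_of_isAlt hT hform E.form_isAlt
    fun _ hu _ hv => E.form_eq_zero_of_mem_ker_of_mem_range hψ hu hv
  obtain ⟨a, rfl⟩ := E.π_surjective α
  obtain ⟨b, rfl⟩ := E.π_surjective β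
  obtain ⟨C, hC⟩ := E.exists_digits hψ hgen
  let cls (x : G) := (LinearMap.range (E.displacement hψ)).mkQ (E.π x)
  refine growthLE_of_twistedGrowth_le hgen (K := Fintype.card Prop)
    (c := 1 + C * wordNorm S a + C * wordNorm S b) fun n hn => ?_
  let rep (x : G) : G := Function.invFunOn cls {g | wordNorm S g ≤ n} (cls x)
  have rep_mem {x} (hx : wordNorm S x ≤ n) : wordNorm S (rep x) ≤ n :=
    Function.invFunOn_mem (s := {g | wordNorm S g ≤ n}) ⟨x, hx, rfl⟩
  have cls_rep {x} (hx : wordNorm S x ≤ n) : cls (rep x) = cls x :=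
    Function.invFunOn_eq (s := {g | wordNorm S g ≤ n}) ⟨x, hx, rfl⟩
  choose! M hM using fun r => hC n r hn
  choose! i k hi hk hk0 hconj using fun x (hx : wordNorm S x ≤ n) =>
    hM (rep x) (rep_mem hx) x hx ((Submodule.Quotient.eq _).1 (cls_rep hx))
  refine twistedGrowth_le_card_mul hgen (fun x => rep x * a ^ i x * b ^ k x)
    (fun x => E.fibreChar hψ (E.π (rep x)) = 0) (fun x hx => ?_) fun x y hx hy hlabel hxy => ?_
  · exact wordNorm_mul_zpow_mul_zpow_le hgen (rep_mem hx) (hi x hx) (hk x hx)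
  · have hπ := E.π_eq_of_twistedConj_refl hxy
    simp only [π_mul, π_zpow] at hπ
    have hchar : E.fibreChar hψ (E.π (rep x)) = E.fibreChar hψ (E.π (rep y)) ∨ k x = k y := by
      by_cases h : E.fibreChar hψ (E.π (rep x)) = 0
      · exact .inl (h.trans (hlabel.mp h).symm)
      · exact .inr ((hk0 x hx h).trans (hk0 y hy (mt hlabel.mpr h)).symm)
    have hcls : cls (rep x) = cls (rep y) :=
      (Submodule.Quotient.eq _).2 (E.sub_mem_range_of_add_smul_eq hψ hα hβ hchar hπ)
    rw [cls_rep hx, cls_rep hy] at hcls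
    have hrep : rep x = rep y := congrArg (Function.invFunOn cls _) hcls
    rw [hrep, add_assoc, add_assoc, add_right_inj] at hπ
    obtain ⟨hi_eq, hk_eq⟩ := hli.eq_of_pair hπ
    have hx_conj := hconj x hx
    rw [hrep, hi_eq, hk_eq] at hx_conj
    exact hx_conj.trans (hconj y hy).symm

end DisplacementNeZero

theorem two_mem_periods_of_map_eq_inv {ψ : G ≃* G} (hψ : ψ E.z = E.z⁻¹) (x : G) :
    2 ∈ E.periods ψ x :=
  ⟨E.z, by simpa [hψ, pow_two, mul_assoc] using congrArg (· * E.z) (E.mul_zpow_z x 1).symm⟩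

theorem growthLE_of_map_eq_or_inv [Module.Free ℤ V] [Module.Finite ℤ V] (hform : E.form ≠ 0)
    {S : Finset G} (hgen : Subgroup.closure (S : Set G) = ⊤) {ψ : G ≃* G}
    (hψ : ψ E.z = E.z ∨ ψ E.z = E.z⁻¹) :
    GrowthLE (fun n => (twistedGrowth ψ S n : ℝ))
      (fun n => (twistedGrowth (MulEquiv.refl G) S n : ℝ)) := by
  obtain hfix | hinv := hψ
  · by_cases hT : E.displacement hfix = 0
    · exact E.growthLE_of_displacement_eq_zero hfix hgen hT
    · exact E.growthLE_of_displacement_ne_zero hfix hgen hT hform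
  · exact E.growthLE_of_forall_mem_periods hgen two_ne_zero (E.two_mem_periods_of_map_eq_inv hinv)

end HeisenbergExtension

/-! ### The isolator of the derived subgroup -/

section Isolator

open scoped commutatorElement

variable {G : Type*} [Group G]

theorem mem_center_of_pow_mem_center (htf : ∀ (g : G) (n : ℕ), 0 < n → g ^ n = 1 → g = 1)
    (hG : commutator G ≤ Subgroup.center G) {x : G} {n : ℕ} (hn : 0 < n)
    (hx : x ^ n ∈ Subgroup.center G) : x ∈ Subgroup.center G := by
  refine Subgroup.mem_center_iff.2 fun g => ?_
  have hcomm : ⁅g, x⁆ ∈ Subgroup.center G :=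
    hG (Subgroup.commutator_mem_commutator (Subgroup.mem_top g) (Subgroup.mem_top x))
  have hconj : g * x * g⁻¹ = ⁅g, x⁆ * x := by simp [commutatorElement_def]
  have hpow : ⁅g, x⁆ ^ n * x ^ n = x ^ n := by
    rw [← (show Commute ⁅g, x⁆ x from (Subgroup.mem_center_iff.1 hcomm x).symm).mul_pow, ← hconj,
      conj_pow, Subgroup.mem_center_iff.1 hx g, mul_inv_cancel_right]
  exact commutatorElement_eq_one_iff_mul_comm.1 (htf _ n hn (mul_eq_right.1 hpow))

variable (G) in
/-- The largest torsion-free abelian quotient of `G`: its kernel is the isolator of the derived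
subgroup. -/
abbrev TorsionFreeAbelianization : Type _ := Abelianization G ⧸ CommGroup.torsion (Abelianization G)

variable (G) in
/-- The quotient map onto the largest torsion-free abelian quotient. -/
def TorsionFreeAbelianization.of : G →* TorsionFreeAbelianization G :=
  (QuotientGroup.mk' _).comp Abelianization.of

theorem TorsionFreeAbelianization.of_surjective :
    Function.Surjective (TorsionFreeAbelianization.of G) :=
  (QuotientGroup.mk'_surjective _).comp (QuotientGroup.mk'_surjective _)

theorem TorsionFreeAbelianization.mem_ker_of {g : G} :
    g ∈ (TorsionFreeAbelianization.of G).ker ↔ ∃ n : ℕ, 0 < n ∧ g ^ n ∈ commutator G := by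
  rw [of, MonoidHom.mem_ker, MonoidHom.comp_apply, ← MonoidHom.mem_ker, QuotientGroup.ker_mk',
    CommGroup.mem_torsion, isOfFinOrder_iff_pow_eq_one]
  simp only [← map_pow, ← MonoidHom.mem_ker, Abelianization.ker_of]

instance TorsionFreeAbelianization.module_finite [Group.FG G] :
    Module.Finite ℤ (Additive (TorsionFreeAbelianization G)) :=
  Module.Finite.iff_addGroup_fg.2 <| GroupFG.iff_add_fg.1 <|
    Group.fg_of_surjective TorsionFreeAbelianization.of_surjective

variable {z : G}

theorem map_eq_or_inv_of_mem_zpowers_iff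
    (hz : ∀ g : G, g ∈ Subgroup.zpowers z ↔ ∃ n : ℕ, 0 < n ∧ g ^ n ∈ commutator G)
    (hord : ¬IsOfFinOrder z) (ψ : G ≃* G) : ψ z = z ∨ ψ z = z⁻¹ := by
  have hcomm (g : G) : ψ.symm g ∈ commutator G ↔ g ∈ commutator G :=
    SetLike.ext_iff.1 (Subgroup.Characteristic.fixed (H := commutator G) inferInstance ψ.symm) g
  have hmap : Subgroup.zpowers z = Subgroup.zpowers (ψ z) := by
    ext g
    rw [← MulEquiv.coe_toMonoidHom, ← MonoidHom.map_zpowers, Subgroup.mem_map_equiv, hz, hz]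
    simp only [← map_pow, hcomm]
  simpa only [eq_comm] using (Subgroup.zpowers_eq_zpowers_iff hord).1 hmap

/-- The central extension of the largest torsion-free abelian quotient of `G` by the isolator of
the derived subgroup, when the latter is generated by a central element `z` of infinite order. -/
def HeisenbergExtension.ofIsolator
    (hz : ∀ g : G, g ∈ Subgroup.zpowers z ↔ ∃ n : ℕ, 0 < n ∧ g ^ n ∈ commutator G)
    (hord : ¬IsOfFinOrder z) (hcen : z ∈ Subgroup.center G) :
    HeisenbergExtension G (Additive (TorsionFreeAbelianization G)) where
  z := z
  z_mem_center := hcen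
  zpow_injective := injective_zpow_iff_not_isOfFinOrder.2 hord
  proj := TorsionFreeAbelianization.of G
  proj_surjective := TorsionFreeAbelianization.of_surjective
  ker_proj := Subgroup.ext fun g => TorsionFreeAbelianization.mem_ker_of.trans (hz g).symm

end Isolator

/-- For a generalised Heisenberg group, the twisted conjugacy growth of any automorphism
is bounded by the ordinary conjugacy growth. -/
theorem twisted_growth_le_conjugacy_growth
    (G : Type*) [Group G] (S : Finset G)
    (hgen : Subgroup.closure (S : Set G) = ⊤)
    (htf : ∀ (g : G) (n : ℕ), 0 < n → g ^ n = 1 → g = 1)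
    (h2step : commutator G ≤ Subgroup.center G)
    (G2 : Subgroup G) [G2.Normal]
    (hG2 : ∀ g : G, g ∈ G2 ↔ ∃ n : ℕ, 0 < n ∧ g ^ n ∈ commutator G)
    (hcyc : IsCyclic G2) (hinf : Infinite G2)
    (ψ : G ≃* G) :
    GrowthLE (fun n => (twistedGrowth ψ S n : ℝ))
      (fun n => (twistedGrowth (MulEquiv.refl G) S n : ℝ)) := by
  have : Group.FG G := ⟨⟨S, hgen⟩⟩
  obtain ⟨z, rfl⟩ := G2.isCyclic_iff_exists_zpowers_eq_top.1 hcyc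
  have hord : ¬IsOfFinOrder z := infinite_zpowers.1 (Set.infinite_coe_iff.1 hinf)
  obtain ⟨n, hn, hzn⟩ := (hG2 z).1 (Subgroup.mem_zpowers z)
  have hcen : z ∈ Subgroup.center G := mem_center_of_pow_mem_center htf h2step hn (h2step hzn)
  let E := HeisenbergExtension.ofIsolator hG2 hord hcen
  exact E.growthLE_of_map_eq_or_inv (E.form_ne_zero hn hzn) hgen
    (map_eq_or_inv_of_mem_zpowers_iff hG2 hord ψ)
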